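/- arXiv:1710.10484 — 4 statements merged into one kernel-verified Lean document; each statement's English description precedes it below -/
import Mathlib

section
/- Let α ∈ [0,1) and let G be a connected graph with ρ := ρ_α(G) ≥ 2. Let P = (u_1,…,u_{r+1}) be a pendent path in G with root u_1, and let x_1,…,x_{r+1} be the entries of a positive unit eigenvector of A_α(G) with eigenvalue ρ corresponding to u_1,…,u_{r+1}. If γ = (1/2)((ρ−2α)/(1−α) + sqrt(((ρ−2α)/(1−α))² − 4)), then x_{r+1} / x_1 > ((γ² − 1)(1−α)) / (γ·((1−α)γ + α)) · γ^{−r}. -/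
/-!
Read the path from its pendent end: `y k = x (u (r - k))`. With `t = (ρ - 2α)/(1 - α) = γ + γ⁻¹` and
`β = α/(1 - α)`, the eigenvalue equation becomes `y 1 = (t + β) y 0` at the leaf and
`y (k+2) = t y (k+1) - y k` at the vertices of degree 2. The characteristic roots are `γ` and `γ⁻¹`, so
`γ y (k+1) - y k = γ^(k+1) (γ + β) y 0` exactly, while `y (k+1) - γ y k` stays positive. Eliminating
`y (r-1)` between the two at `k = r - 1` gives `(γ² - 1) y r < γ^(r+1) (γ + β) y 0`, which is the claim
(`pendent_recurrence_bound`); for `r = 0` it is a direct inequality. The leaf and interior equations come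
from `Aalpha_eigen_apply`, as the path supplies all neighbours of these vertices.
-/

/-- The spectral radius (largest eigenvalue) of a real symmetric matrix, as the
supremum of its set of real eigenvalues. -/
noncomputable def specRad {n : Type*} [Fintype n] (M : Matrix n n ℝ) : ℝ :=
  sSup {t : ℝ | ∃ v : n → ℝ, v ≠ 0 ∧ M.mulVec v = t • v}

/-- The matrix `A_α(G) = α·D(G) + (1-α)·A(G)`. -/
noncomputable def Aalpha {V : Type*} [Fintype V] [DecidableEq V]
    (α : ℝ) (G : SimpleGraph V) : Matrix V V ℝ :=
  letI := Classical.decRel G.Adj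
  α • Matrix.diagonal (fun v => (G.degree v : ℝ)) + (1 - α) • G.adjMatrix ℝ

/-- The `α`-index `ρ_α(G)`: the spectral radius of `A_α(G)`. -/
noncomputable def rhoAlpha {V : Type*} [Fintype V] [DecidableEq V]
    (α : ℝ) (G : SimpleGraph V) : ℝ :=
  specRad (Aalpha α G)


/-- `w` is a cut vertex of `G`: `G` is connected but deleting `w` disconnects it. -/
def IsCutVertex {V : Type*} (G : SimpleGraph V) (w : V) : Prop :=
  G.Connected ∧ ¬ (G.induce {x | x ≠ w}).Connected

/-- `(u 0, u 1, …, u r)` is a pendent path of `G` with root `u 0`: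
the vertices are distinct, consecutive ones are adjacent, the root is a cut
vertex of `G`, the internal vertices have degree 2 in `G`, and the last vertex
has degree 1 in `G`. -/
def IsPendentPath {V : Type*} [Fintype V] [DecidableEq V]
    (G : SimpleGraph V) {r : ℕ} (u : Fin (r + 1) → V) : Prop :=
  letI := Classical.decRel G.Adj
  Function.Injective u ∧
  (∀ i : Fin r, G.Adj (u i.castSucc) (u i.succ)) ∧
  (∀ i : Fin (r + 1), 0 < i.val → i.val < r → G.degree (u i) = 2) ∧
  (0 < r → G.degree (u (Fin.last r)) = 1) ∧
  IsCutVertex G (u 0)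

/-- `γ`, the larger root of `X² − ((ρ−2α)/(1−α))X + 1 = 0`. -/
noncomputable def gammaOf (α ρ : ℝ) : ℝ :=
  (1 / 2) * ((ρ - 2 * α) / (1 - α) +
    Real.sqrt (((ρ - 2 * α) / (1 - α)) ^ 2 - 4))

/-- The eigenvalue equation of `A_α(G)` at a vertex, for any decidability instance. -/
lemma Aalpha_eigen_apply {V : Type*} [Fintype V] [DecidableEq V] {α ρ : ℝ} {G : SimpleGraph V}
    [DecidableRel G.Adj] {x : V → ℝ} (h : (Aalpha α G).mulVec x = ρ • x) (v : V) :
    α * (G.degree v * x v) + (1 - α) * ∑ w ∈ G.neighborFinset v, x w = ρ * x v := by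
  have hv := congrFun h v
  have hdec : (Classical.decRel G.Adj) = (inferInstance : DecidableRel G.Adj) :=
    Subsingleton.elim _ _
  rw [Aalpha, hdec] at hv
  simpa [Matrix.add_mulVec, Matrix.smul_mulVec, Matrix.mulVec_diagonal,
    SimpleGraph.adjMatrix_mulVec_apply] using hv

lemma gammaOf_spec {α ρ : ℝ} (hα1 : α < 1) (hρ : 2 ≤ ρ) :
    1 ≤ gammaOf α ρ ∧ gammaOf α ρ ^ 2 + 1 = (ρ - 2 * α) / (1 - α) * gammaOf α ρ := by
  have ht : 2 ≤ (ρ - 2 * α) / (1 - α) := by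
    rw [le_div_iff₀ (by linarith)]; linarith
  unfold gammaOf
  set t := (ρ - 2 * α) / (1 - α)
  have hs := Real.sqrt_nonneg (t ^ 2 - 4)
  have hs2 := Real.sq_sqrt (show 0 ≤ t ^ 2 - 4 by nlinarith)
  constructor
  · linarith
  · nlinarith

/-- The bound for an abstract solution of the recurrence along a pendent path with `n + 1` edges,
indexed from the leaf. -/
lemma pendent_recurrence_bound {g t β : ℝ} (hg : 1 ≤ g) (hgt : g ^ 2 + 1 = t * g) (hβ : 0 ≤ β)
    {y : ℕ → ℝ} (hy0 : 0 < y 0) (hy1 : y 1 = (t + β) * y 0) (n : ℕ)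
    (hrec : ∀ k, k + 1 < n + 1 → y (k + 2) = t * y (k + 1) - y k) :
    (g ^ 2 - 1) * y (n + 1) < g ^ (n + 2) * (g + β) * y 0 := by
  have hg0 : 0 < g := by linarith
  have key : ∀ k, k ≤ n → g * y (k + 1) - y k = g ^ (k + 1) * (g + β) * y 0 ∧
      g * y k < y (k + 1) := by
    intro k
    induction k with
    | zero =>
      intro _
      refine ⟨?_, ?_⟩
      · rw [zero_add, hy1]
        linear_combination (-y 0) * hgt
      · rw [zero_add, hy1]
        have : g < t + β := by nlinarith
        exact mul_lt_mul_of_pos_right this hy0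
    | succ k ih =>
      intro hk
      obtain ⟨h1, h2⟩ := ih (by omega)
      have h3 := hrec k (by omega)
      refine ⟨?_, ?_⟩
      · rw [show k + 1 + 1 = k + 2 from rfl, h3]
        linear_combination g * h1 - y (k + 1) * hgt
      · -- multiplied by `g`, the claim is the previous inequality
        rw [show k + 1 + 1 = k + 2 from rfl, h3]
        refine lt_of_mul_lt_mul_left ?_ hg0.le
        linear_combination h2 + y (k + 1) * hgt
  obtain ⟨h1, h2⟩ := key n le_rfl
  have h4 : g * (g * y (n + 1) - y n) = g ^ (n + 2) * (g + β) * y 0 := by rw [h1]; ring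
  linarith

/-- Let `α ∈ [0,1)` and `G` a connected graph with
`ρ := ρ_α(G) ≥ 2`. Let `(u 0, …, u r)` be a pendent path in `G` with root `u 0`,
and let `x` be a positive unit eigenvector of `A_α(G)` with eigenvalue `ρ`.
With `γ` as usual,
`x (u r) / x (u 0) > ((γ² − 1)(1−α)) / (γ((1−α)γ + α)) · γ^{−r}`. -/
theorem pendentPath_last_lower_bound (α : ℝ) (hα0 : 0 ≤ α) (hα1 : α < 1)
    {V : Type*} [Fintype V] [DecidableEq V] (G : SimpleGraph V)
    (hconn : G.Connected) (hρ : 2 ≤ rhoAlpha α G)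
    {r : ℕ} (u : Fin (r + 1) → V) (hpath : IsPendentPath G u)
    (x : V → ℝ) (hx : ∀ w, 0 < x w) (hunit : ∑ w, x w ^ 2 = 1)
    (heig : (Aalpha α G).mulVec x = rhoAlpha α G • x) :
    ((gammaOf α (rhoAlpha α G) ^ 2 - 1) * (1 - α)) /
        (gammaOf α (rhoAlpha α G) * ((1 - α) * gammaOf α (rhoAlpha α G) + α)) *
        gammaOf α (rhoAlpha α G) ^ (-(r : ℤ)) <
      x (u (Fin.last r)) / x (u 0) := by
  classical
  obtain ⟨hinj, hadj, hdeg2, hdeg1, -⟩ := hpath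
  obtain ⟨hg, hgt⟩ := gammaOf_spec hα1 hρ
  set ρ := rhoAlpha α G
  set g := gammaOf α ρ
  have hg0 : 0 < g := by linarith
  have ha : 0 < 1 - α := by linarith
  have hden : 0 < g * ((1 - α) * g + α) := by positivity
  rcases r with _ | n
  · have : x (u (Fin.last 0)) / x (u 0) = 1 := div_self (hx _).ne'
    rw [this]
    simp only [CharP.cast_eq_zero, neg_zero, zpow_zero, mul_one]
    rw [div_lt_one hden]
    nlinarith [mul_nonneg hα0 hg0.le]
  · have hadj' : ∀ i j : ℕ, ∀ (hi : i < n + 2) (hj : j < n + 2), i + 1 = j →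
        G.Adj (u ⟨i, hi⟩) (u ⟨j, hj⟩) := by
      rintro i _ hi hj rfl
      exact hadj ⟨i, by omega⟩
    let y : ℕ → ℝ := fun k => x (u ⟨n + 1 - k, by omega⟩)
    have hy1 : y 1 = ((ρ - 2 * α) / (1 - α) + α / (1 - α)) * y 0 := by
      have hA := (hadj' n (n + 1) (by omega) (by omega) rfl).symm
      have hd : G.degree (u ⟨n + 1, by omega⟩) = 1 := by
        convert hdeg1 (by omega)
        rfl
      have hN : G.neighborFinset (u ⟨n + 1, by omega⟩) = {u ⟨n, by omega⟩} := by
        symm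
        apply Finset.eq_of_subset_of_card_le
        · simpa using hA
        · simp [hd]
      have h := Aalpha_eigen_apply heig (u ⟨n + 1, by omega⟩)
      rw [hN, hd, Finset.sum_singleton] at h
      change x (u ⟨n, _⟩) = _ * x (u ⟨n + 1, _⟩)
      field_simp
      push_cast at h
      linarith
    have hrec : ∀ k, k + 1 < n + 1 →
        y (k + 2) = (ρ - 2 * α) / (1 - α) * y (k + 1) - y k := by
      intro k hk
      have hA := hadj' (n + 1 - (k + 1)) (n + 1 - k) (by omega) (by omega) (by omega)
      have hB := (hadj' (n + 1 - (k + 2)) (n + 1 - (k + 1)) (by omega) (by omega) (by omega)).symm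
      have hd : G.degree (u ⟨n + 1 - (k + 1), by omega⟩) = 2 := by
        convert hdeg2 ⟨n + 1 - (k + 1), by omega⟩ (by simp only; omega) (by simp only; omega)
      have hne : u ⟨n + 1 - k, by omega⟩ ≠ u ⟨n + 1 - (k + 2), by omega⟩ := by
        intro h
        have := congrArg Fin.val (hinj h)
        simp only at this
        omega
      have hN : G.neighborFinset (u ⟨n + 1 - (k + 1), by omega⟩) =
          {u ⟨n + 1 - k, by omega⟩, u ⟨n + 1 - (k + 2), by omega⟩} := by
        symm
        apply Finset.eq_of_subset_of_card_le
        · intro w hw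
          rw [Finset.mem_insert, Finset.mem_singleton] at hw
          rw [SimpleGraph.mem_neighborFinset]
          rcases hw with rfl | rfl
          · exact hA
          · exact hB
        · rw [SimpleGraph.card_neighborFinset_eq_degree, hd, Finset.card_pair hne]
      have h := Aalpha_eigen_apply heig (u ⟨n + 1 - (k + 1), by omega⟩)
      rw [hN, hd, Finset.sum_pair hne] at h
      change α * (_ * y (k + 1)) + (1 - α) * (y k + y (k + 2)) = ρ * y (k + 1) at h
      field_simp
      push_cast at h
      linarith
    have hb := pendent_recurrence_bound hg hgt (div_nonneg hα0 ha.le) (hx _) hy1 n hrec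
    have e0 : y 0 = x (u (Fin.last (n + 1))) := rfl
    have e1 : y (n + 1) = x (u 0) := by
      change x (u ⟨n + 1 - (n + 1), _⟩) = _
      congr 2
      ext
      simp
    rw [e0, e1] at hb
    have hx0 := hx (u 0)
    rw [zpow_neg, zpow_natCast, ← div_eq_mul_inv, div_div, div_lt_div_iff₀ (by positivity) hx0]
    have e2 : (1 - α) * (g + α / (1 - α)) = (1 - α) * g + α := by field_simp
    calc (g ^ 2 - 1) * (1 - α) * x (u 0) = (1 - α) * ((g ^ 2 - 1) * x (u 0)) := by ring
      _ < (1 - α) * (g ^ (n + 2) * (g + α / (1 - α)) * x (u (Fin.last (n + 1)))) :=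
        mul_lt_mul_of_pos_left hb ha
      _ = g ^ (n + 2) * ((1 - α) * (g + α / (1 - α))) * x (u (Fin.last (n + 1))) := by ring
      _ = _ := by rw [e2]; ring
end

section
/- Let α ∈ [0,1) and ρ ≥ 5/2 be real numbers, and set γ = (1/2)((ρ−2α)/(1−α) + sqrt(((ρ−2α)/(1−α))² − 4)). Then ((γ² − 1)(1−α)) / ((1−α)γ + α) ≥ 3/2. -/
/-- `γ ≥ 1`, and the quadratic equation of `γ` multiplied by `1 - α`, rewritten around `γ = 1`. -/
theorem gammaOf_quadratic (α ρ : ℝ) (hα1 : α < 1) (hρ : 2 ≤ ρ) :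
    1 ≤ gammaOf α ρ ∧ (1 - α) * (gammaOf α ρ - 1) ^ 2 = (ρ - 2) * gammaOf α ρ := by
  have hb : 0 < 1 - α := by linarith
  unfold gammaOf
  have hbt : (1 - α) * ((ρ - 2 * α) / (1 - α)) = ρ - 2 * α := mul_div_cancel₀ _ hb.ne'
  have ht2 : 2 ≤ (ρ - 2 * α) / (1 - α) := by
    rw [le_div_iff₀ hb]
    linarith
  generalize (ρ - 2 * α) / (1 - α) = t at *
  have hs0 := Real.sqrt_nonneg (t ^ 2 - 4)
  have hs : Real.sqrt (t ^ 2 - 4) ^ 2 = t ^ 2 - 4 := Real.sq_sqrt (by nlinarith)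
  generalize Real.sqrt (t ^ 2 - 4) = s at *
  refine ⟨by linarith, ?_⟩
  linear_combination (1 - α) / 4 * hs + (t + s) / 2 * hbt

/-- Let `α ∈ [0,1)` and `ρ ≥ 5/2`. Then
`((γ² − 1)(1−α)) / ((1−α)γ + α) ≥ 3/2`. -/
theorem gamma_ratio_ge (α ρ : ℝ) (hα0 : 0 ≤ α) (hα1 : α < 1) (hρ : 5 / 2 ≤ ρ) :
    3 / 2 ≤ ((gammaOf α ρ ^ 2 - 1) * (1 - α)) / ((1 - α) * gammaOf α ρ + α) := by
  obtain ⟨h1, hq⟩ := gammaOf_quadratic α ρ hα1 (by linarith)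
  have hb : 0 < 1 - α := by linarith
  obtain ⟨u, hu⟩ : ∃ u, gammaOf α ρ = u + 1 := ⟨gammaOf α ρ - 1, by ring⟩
  rw [hu] at h1 hq ⊢
  have hu0 : 0 ≤ u := by linarith
  have hkey : (u + 1) / 2 ≤ (1 - α) * u ^ 2 := by nlinarith
  -- `b ≤ 1` turns the key bound into `(2u + 1)(u - 1) ≥ 0`
  have hu1 : 1 ≤ u := by
    have h : (u + 1) / 2 ≤ u ^ 2 := by nlinarith [mul_nonneg hα0 (sq_nonneg u)]
    by_contra! hlt
    nlinarith
  have hfin : 3 / 2 ≤ (1 - α) * u ^ 2 + (1 - α) * u / 2 := by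
    have h4 : (4 * u) * (3 / 2) ≤ (4 * u) * ((1 - α) * u ^ 2 + (1 - α) * u / 2) := by
      have h5 := mul_le_mul_of_nonneg_right hkey (by linarith : 0 ≤ 4 * u + 2)
      nlinarith [mul_nonneg (by linarith : 0 ≤ 2 * u - 1) (by linarith : 0 ≤ u - 1)]
    exact le_of_mul_le_mul_left h4 (by linarith)
  have hden : 0 < (1 - α) * (u + 1) + α := by nlinarith
  rw [le_div_iff₀ hden]
  linarith
end

section
/- Let α ∈ [0,1) and let H be a connected graph with ρ_α(H) ≥ 5/2. Let u and v be vertices of H. Let G be the graph obtained from H by attaching a path P = (u_1 = u, u_2, …, u_p) to u and a path Q = (v_1 = v, v_2, …, v_q) to v (attaching means the new path vertices u_2,…,u_p and v_2,…,v_q are added, with u_1 identified with u and v_1 identified with v). Let x be a positive unit eigenvector of A_α(G) with eigenvalue ρ_α(G); write x_1,…,x_p for the entries of x at u_1,…,u_p and y_1,…,y_q for the entries at v_1,…,v_q. If q ≥ 1 and p ≥ q + 2, then y_q / x_{p−1} ≥ (3/2)·(y_1 / x_1). -/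
def attachRel {V : Type*} (H : SimpleGraph V) (u v : V) (a b : ℕ) :
    V ⊕ (Fin a ⊕ Fin b) → V ⊕ (Fin a ⊕ Fin b) → Prop
  | Sum.inl x, Sum.inl y => H.Adj x y
  | Sum.inl x, Sum.inr (Sum.inl i) => x = u ∧ i.val = 0
  | Sum.inl x, Sum.inr (Sum.inr i) => x = v ∧ i.val = 0
  | Sum.inr (Sum.inl i), Sum.inr (Sum.inl j) => i.val + 1 = j.val
  | Sum.inr (Sum.inr i), Sum.inr (Sum.inr j) => i.val + 1 = j.val
  | _, _ => False

/-- The graph `H_{a+1,b+1}(u,v)` obtained from `H` by attaching a path with `a + 1`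
vertices to `u` (its `a` new vertices being `Fin a`) and a path with `b + 1`
vertices to `v` (its `b` new vertices being `Fin b`); attaching a path means
identifying one of its end-vertices with the root vertex. -/
def attachTwoPaths {V : Type*} (H : SimpleGraph V) (u v : V) (a b : ℕ) :
    SimpleGraph (V ⊕ (Fin a ⊕ Fin b)) :=
  SimpleGraph.fromRel (attachRel H u v a b)

/-- The `k`-th vertex (1-indexed) of the path attached at `u` in `attachTwoPaths`:
`u_1 = u` and, for `2 ≤ k ≤ a + 1`, `u_k` is the `(k-2)`-nd new vertex. -/
def uVert {V : Type*} (u : V) (a b : ℕ) (k : ℕ) : V ⊕ (Fin a ⊕ Fin b) :=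
  if h : 2 ≤ k ∧ k ≤ a + 1 then Sum.inr (Sum.inl ⟨k - 2, by omega⟩) else Sum.inl u

/-- The `k`-th vertex (1-indexed) of the path attached at `v` in `attachTwoPaths`:
`v_1 = v` and, for `2 ≤ k ≤ b + 1`, `v_k` is the `(k-2)`-nd new vertex. -/
def vVert {V : Type*} (v : V) (a b : ℕ) (k : ℕ) : V ⊕ (Fin a ⊕ Fin b) :=
  if h : 2 ≤ k ∧ k ≤ b + 1 then Sum.inr (Sum.inr ⟨k - 2, by omega⟩) else Sum.inl v

/-! ### The path recurrence -/

/-- The entries of the eigenvector along a pendent path, counted from the pendent end and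
normalised to be `1` there. -/
def pathSeq (s t : ℝ) : ℕ → ℝ
  | 0 => 1
  | 1 => s
  | k + 2 => t * pathSeq s t (k + 1) - pathSeq s t k

theorem pathSeq_growth {s t : ℝ} (ht : 5 / 2 ≤ t) (hs : t ≤ s) (k : ℕ) :
    0 < pathSeq s t k ∧ (t - 1 / 2) * pathSeq s t k ≤ pathSeq s t (k + 1) := by
  induction k with
  | zero => simp only [pathSeq]; constructor <;> linarith
  | succ k ih =>
    obtain ⟨h0, h1⟩ := ih
    have h2 : 2 * pathSeq s t k ≤ pathSeq s t (k + 1) := by nlinarith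
    refine ⟨by linarith, ?_⟩
    simp only [pathSeq]
    linarith

theorem pathSeq_mono {s t : ℝ} (ht : 5 / 2 ≤ t) (hs : t ≤ s) : Monotone (pathSeq s t) := by
  refine monotone_nat_of_le_succ fun k => ?_
  obtain ⟨h0, h1⟩ := pathSeq_growth ht hs k
  nlinarith

theorem pathSeq_ratio {s t : ℝ} (ht : 5 / 2 ≤ t) (hs : t ≤ s) (hs' : s ≤ 3 * t - 5)
    {m n : ℕ} (hmn : m + 2 ≤ n) :
    3 / 2 * (pathSeq s t m * s) ≤ pathSeq s t n := by
  refine le_trans ?_ (pathSeq_mono ht hs hmn)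
  obtain ⟨h0, h1⟩ := pathSeq_growth ht hs m
  simp only [pathSeq]
  have h2 : t * ((t - 1 / 2) * pathSeq s t m) ≤ t * pathSeq s t (m + 1) :=
    mul_le_mul_of_nonneg_left h1 (by linarith)
  have h3 : 3 / 2 * s ≤ t * (t - 1 / 2) - 1 := by nlinarith [sq_nonneg (t - 5 / 2)]
  have h4 := mul_le_mul_of_nonneg_right h3 h0.le
  linarith

/-- Here `X 1, …, X n` are the entries along a path attached at its first vertex; the two hypotheses
are the eigenvalue equations at its inner vertices and at its pendent end. -/
theorem eq_pathSeq_mul {s t : ℝ} (X : ℕ → ℝ) (n : ℕ)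
    (hmid : ∀ k, 2 ≤ k → k + 1 ≤ n → X (k - 1) + X (k + 1) = t * X k)
    (hend : 2 ≤ n → X (n - 1) = s * X n) (j : ℕ) (hj : j + 1 ≤ n) :
    X (n - j) = pathSeq s t j * X n := by
  induction j using Nat.strong_induction_on with
  | _ j ih =>
    match j, hj, ih with
    | 0, _, _ => simp [pathSeq]
    | 1, hj, _ => simpa [pathSeq] using hend hj
    | j + 2, hj, ih =>
      have h0 := ih j (by omega) (by omega)
      have h1 := ih (j + 1) (by omega) (by omega)
      have h2 := hmid (n - (j + 1)) (by omega) (by omega)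
      rw [show n - (j + 1) - 1 = n - (j + 2) by omega,
        show n - (j + 1) + 1 = n - j by omega, h0, h1] at h2
      simp only [pathSeq]
      linarith

/-! ### The matrix `A_α` -/

/-- Collatz–Wielandt bound: a positive vector `z` with `M z ≤ r z` bounds the real eigenvalues of a
nonnegative matrix `M` by `r`. -/
theorem eigenvalue_le_of_pos_supersolution {n : Type*} [Fintype n] (M : Matrix n n ℝ)
    (hM : ∀ i j, 0 ≤ M i j) (z : n → ℝ) (hz : ∀ i, 0 < z i) (r : ℝ)
    (h : ∀ i, M.mulVec z i ≤ r * z i) (t : ℝ) (w : n → ℝ) (hw : w ≠ 0)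
    (ht : M.mulVec w = t • w) : t ≤ r := by
  obtain ⟨i₀, hi₀⟩ : ∃ i, w i ≠ 0 := Function.ne_iff.mp hw
  -- the row where `|w i| / z i` is largest
  obtain ⟨i, -, hi⟩ := Finset.exists_max_image Finset.univ (fun i => |w i| / z i)
    ⟨i₀, Finset.mem_univ _⟩
  set m := |w i| / z i with hm
  have hmpos : 0 < m := lt_of_lt_of_le (div_pos (abs_pos.mpr hi₀) (hz i₀)) (hi i₀ (Finset.mem_univ _))
  have hle : ∀ j, |w j| ≤ m * z j := fun j => (div_le_iff₀ (hz j)).mp (hi j (Finset.mem_univ _))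
  have hwi : |w i| = m * z i := by rw [hm, div_mul_cancel₀ _ (hz i).ne']
  have key : t * (m * z i) ≤ r * (m * z i) := by
    calc t * (m * z i) ≤ |t| * |w i| := by
          rw [← hwi]; exact mul_le_mul_of_nonneg_right (le_abs_self t) (abs_nonneg _)
      _ = |M.mulVec w i| := by rw [ht, Pi.smul_apply, smul_eq_mul, abs_mul]
      _ ≤ ∑ j, |M i j * w j| := Finset.abs_sum_le_sum_abs _ _
      _ ≤ ∑ j, m * (M i j * z j) := by
          refine Finset.sum_le_sum fun j _ => ?_
          rw [abs_mul, abs_of_nonneg (hM i j)]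
          have := mul_le_mul_of_nonneg_left (hle j) (hM i j)
          linarith
      _ = m * M.mulVec z i := by rw [← Finset.mul_sum]; rfl
      _ ≤ m * (r * z i) := mul_le_mul_of_nonneg_left (h i) hmpos.le
      _ = r * (m * z i) := by ring
  exact le_of_mul_le_mul_right key (mul_pos hmpos (hz i))

open Classical in
theorem Aalpha_mulVec {V : Type*} [Fintype V] [DecidableEq V] (α : ℝ) (G : SimpleGraph V)
    (x : V → ℝ) (i : V) :
    (Aalpha α G).mulVec x i = ∑ j, if G.Adj i j then α * x i + (1 - α) * x j else 0 := by
  have hdeg : (G.degree i : ℝ) = ∑ j, if G.Adj i j then (1 : ℝ) else 0 := by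
    rw [Finset.sum_boole, ← SimpleGraph.card_neighborFinset_eq_degree,
      SimpleGraph.neighborFinset_eq_filter]
  simp only [Aalpha, Matrix.add_mulVec, Matrix.smul_mulVec, Pi.add_apply, Pi.smul_apply,
    Matrix.mulVec_diagonal, smul_eq_mul]
  rw [hdeg, Matrix.mulVec, dotProduct, Finset.sum_mul, Finset.mul_sum, Finset.mul_sum,
    ← Finset.sum_add_distrib]
  refine Finset.sum_congr rfl fun j _ => ?_
  by_cases h : G.Adj i j <;> simp [SimpleGraph.adjMatrix_apply, h]

theorem Aalpha_nonneg {V : Type*} [Fintype V] [DecidableEq V] {α : ℝ} (h0 : 0 ≤ α) (h1 : α < 1)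
    (G : SimpleGraph V) (i j : V) : 0 ≤ Aalpha α G i j := by
  have h2 : 0 ≤ 1 - α := by linarith
  simp only [Aalpha, Matrix.add_apply, Matrix.smul_apply, smul_eq_mul]
  refine add_nonneg (mul_nonneg h0 ?_) (mul_nonneg h2 ?_)
  · rw [Matrix.diagonal_apply]; split_ifs <;> positivity
  · rw [SimpleGraph.adjMatrix_apply]; split_ifs <;> norm_num

theorem Aalpha_mulVec_two {V : Type*} [Fintype V] [DecidableEq V] (α : ℝ) (G : SimpleGraph V)
    (x : V → ℝ) (i a b : V) (hab : a ≠ b) (h : ∀ w, G.Adj i w ↔ w = a ∨ w = b) :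
    (Aalpha α G).mulVec x i = 2 * α * x i + (1 - α) * (x a + x b) := by
  classical
  rw [Aalpha_mulVec, ← Finset.sum_filter,
    show Finset.univ.filter (fun w => G.Adj i w) = {a, b} by ext w; simp [h],
    Finset.sum_pair hab]
  ring

theorem Aalpha_mulVec_one {V : Type*} [Fintype V] [DecidableEq V] (α : ℝ) (G : SimpleGraph V)
    (x : V → ℝ) (i a : V) (h : ∀ w, G.Adj i w ↔ w = a) :
    (Aalpha α G).mulVec x i = α * x i + (1 - α) * x a := by
  classical
  rw [Aalpha_mulVec, ← Finset.sum_filter,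
    show Finset.univ.filter (fun w => G.Adj i w) = {a} by ext w; simp [h],
    Finset.sum_singleton]

/-! ### Neighbourhoods in the graph with two pendent paths -/

section
variable {V : Type*} (H : SimpleGraph V) (u v : V) (a b : ℕ)

theorem attach_adj_inl (i j : V) :
    (attachTwoPaths H u v a b).Adj (Sum.inl i) (Sum.inl j) ↔ H.Adj i j := by
  simp only [attachTwoPaths, SimpleGraph.fromRel_adj, attachRel, ne_eq, Sum.inl.injEq]
  constructor
  · rintro ⟨-, h | h⟩
    exacts [h, h.symm]
  · exact fun h => ⟨h.ne, Or.inl h⟩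

theorem uVert_adj_mid (k : ℕ) (h2 : 2 ≤ k) (hk : k ≤ a) (w : V ⊕ (Fin a ⊕ Fin b)) :
    (attachTwoPaths H u v a b).Adj (uVert u a b k) w ↔
      w = uVert u a b (k - 1) ∨ w = uVert u a b (k + 1) := by
  rcases w with w | w | w <;> by_cases h3 : 2 ≤ k - 1 <;>
    simp [attachTwoPaths, attachRel, uVert, Fin.ext_iff, h2, hk, h3,
      show k ≤ a + 1 by omega, show k - 1 ≤ a + 1 by omega, show 2 ≤ k + 1 by omega] <;> omega

theorem vVert_adj_mid (k : ℕ) (h2 : 2 ≤ k) (hk : k ≤ b) (w : V ⊕ (Fin a ⊕ Fin b)) :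
    (attachTwoPaths H u v a b).Adj (vVert v a b k) w ↔
      w = vVert v a b (k - 1) ∨ w = vVert v a b (k + 1) := by
  rcases w with w | w | w <;> by_cases h3 : 2 ≤ k - 1 <;>
    simp [attachTwoPaths, attachRel, vVert, Fin.ext_iff, h2, hk, h3,
      show k ≤ b + 1 by omega, show k - 1 ≤ b + 1 by omega, show 2 ≤ k + 1 by omega] <;> omega

theorem uVert_adj_end (ha : 1 ≤ a) (w : V ⊕ (Fin a ⊕ Fin b)) :
    (attachTwoPaths H u v a b).Adj (uVert u a b (a + 1)) w ↔ w = uVert u a b a := by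
  rcases w with w | w | w <;> by_cases h3 : 2 ≤ a <;>
    simp [attachTwoPaths, attachRel, uVert, Fin.ext_iff, ha, h3] <;> omega

theorem vVert_adj_end (hb : 1 ≤ b) (w : V ⊕ (Fin a ⊕ Fin b)) :
    (attachTwoPaths H u v a b).Adj (vVert v a b (b + 1)) w ↔ w = vVert v a b b := by
  rcases w with w | w | w <;> by_cases h3 : 2 ≤ b <;>
    simp [attachTwoPaths, attachRel, vVert, Fin.ext_iff, hb, h3] <;> omega

theorem uVert_ne (k : ℕ) (h2 : 2 ≤ k) (hk : k ≤ a) :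
    uVert u a b (k - 1) ≠ uVert u a b (k + 1) := by
  by_cases h3 : 2 ≤ k - 1 <;>
    simp [uVert, Fin.ext_iff, hk, h3, show k - 1 ≤ a + 1 by omega, show 2 ≤ k + 1 by omega] <;> omega

theorem vVert_ne (k : ℕ) (h2 : 2 ≤ k) (hk : k ≤ b) :
    vVert v a b (k - 1) ≠ vVert v a b (k + 1) := by
  by_cases h3 : 2 ≤ k - 1 <;>
    simp [vVert, Fin.ext_iff, hk, h3, show k - 1 ≤ b + 1 by omega, show 2 ≤ k + 1 by omega] <;> omega

end

/-- Attaching the two paths does not decrease the `α`-index; the larger graph is given through a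
positive eigenvector. -/
theorem rhoAlpha_le_of_pos_eigenvector {α : ℝ} (hα0 : 0 ≤ α) (hα1 : α < 1)
    {V : Type*} [Fintype V] [DecidableEq V] (H : SimpleGraph V) (u v : V) (a b : ℕ) (r : ℝ)
    (x : V ⊕ (Fin a ⊕ Fin b) → ℝ) (hx : ∀ w, 0 < x w)
    (heig : (Aalpha α (attachTwoPaths H u v a b)).mulVec x = r • x) :
    rhoAlpha α H ≤ r := by
  classical
  have hα2 : 0 < 1 - α := by linarith
  have hterm : ∀ i j, 0 ≤ α * x i + (1 - α) * x j := fun i j =>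
    add_nonneg (mul_nonneg hα0 (hx i).le) (mul_nonneg hα2.le (hx j).le)
  have hsup : ∀ i, (Aalpha α H).mulVec (fun i => x (Sum.inl i)) i ≤ r * x (Sum.inl i) := by
    intro i
    have h := congrFun heig (Sum.inl i)
    rw [Pi.smul_apply, smul_eq_mul] at h
    rw [← h, Aalpha_mulVec, Aalpha_mulVec, Fintype.sum_sum_type]
    simp only [attach_adj_inl]
    refine le_add_of_nonneg_right (Finset.sum_nonneg fun j _ => ?_)
    split_ifs
    exacts [hterm _ _, le_rfl]
  refine Real.sSup_le ?_ ?_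
  · rintro t ⟨w, hw, ht⟩
    exact eigenvalue_le_of_pos_supersolution _ (Aalpha_nonneg hα0 hα1 H) _
      (fun i => hx (Sum.inl i)) r hsup t w hw ht
  · have h := congrFun heig (Sum.inl u)
    rw [Pi.smul_apply, smul_eq_mul, Aalpha_mulVec] at h
    refine nonneg_of_mul_nonneg_left (b := x (Sum.inl u)) ?_ (hx _)
    rw [← h]
    refine Finset.sum_nonneg fun j _ => ?_
    split_ifs
    exacts [hterm _ _, le_rfl]

/-- Let `α ∈ [0,1)` and `H` a connected graph with
`ρ_α(H) ≥ 5/2`. Let `G` be obtained from `H` by attaching a path with `p`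
vertices to `u` and a path with `q` vertices to `v`, and let `x` be a positive
unit eigenvector of `A_α(G)` with eigenvalue `ρ_α(G)`. If `q ≥ 1` and
`p ≥ q + 2`, then `y_q / x_{p−1} ≥ (3/2)·(y_1 / x_1)`. -/
theorem two_pendent_paths_ratio (α : ℝ) (hα0 : 0 ≤ α) (hα1 : α < 1)
    {V : Type*} [Fintype V] [DecidableEq V] (H : SimpleGraph V)
    (hconn : H.Connected) (hρ : 5 / 2 ≤ rhoAlpha α H)
    (u v : V) (p q : ℕ) (hq : 1 ≤ q) (hp : q + 2 ≤ p)
    (x : V ⊕ (Fin (p - 1) ⊕ Fin (q - 1)) → ℝ)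
    (hx : ∀ w, 0 < x w) (hunit : ∑ w, x w ^ 2 = 1)
    (heig : (Aalpha α (attachTwoPaths H u v (p - 1) (q - 1))).mulVec x =
      rhoAlpha α (attachTwoPaths H u v (p - 1) (q - 1)) • x) :
    3 / 2 * (x (vVert v (p - 1) (q - 1) 1) / x (uVert u (p - 1) (q - 1) 1)) ≤
      x (vVert v (p - 1) (q - 1) q) / x (uVert u (p - 1) (q - 1) (p - 1)) := by
  have hα2 : 0 < 1 - α := by linarith
  have hr := hρ.trans (rhoAlpha_le_of_pos_eigenvector hα0 hα1 H u v (p - 1) (q - 1) _ x hx heig)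
  generalize rhoAlpha α (attachTwoPaths H u v (p - 1) (q - 1)) = r at heig hr
  have hE : ∀ w, (Aalpha α (attachTwoPaths H u v (p - 1) (q - 1))).mulVec x w = r * x w :=
    fun w => by rw [heig]; rfl
  obtain ⟨t, ht⟩ : ∃ t, t * (1 - α) = r - 2 * α := ⟨_, div_mul_cancel₀ _ hα2.ne'⟩
  obtain ⟨s, hs⟩ : ∃ s, s * (1 - α) = r - α := ⟨_, div_mul_cancel₀ _ hα2.ne'⟩
  have ht1 : 5 / 2 ≤ t := le_of_mul_le_mul_right (by rw [ht]; linarith) hα2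
  have hts : t ≤ s := le_of_mul_le_mul_right (by rw [ht, hs]; linarith) hα2
  have hst : s ≤ 3 * t - 5 := by
    refine le_of_mul_le_mul_right ?_ hα2
    linarith
  -- the eigenvalue equation at a path vertex, divided by `1 - α`
  have hmid : ∀ A B C : ℝ, 2 * α * B + (1 - α) * (A + C) = r * B → A + C = t * B := by
    intro A B C h
    refine mul_left_cancel₀ hα2.ne' ?_
    linear_combination h - B * ht
  have hend : ∀ A B : ℝ, α * B + (1 - α) * A = r * B → A = s * B := by
    intro A B h
    refine mul_left_cancel₀ hα2.ne' ?_
    linear_combination h - B * hs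
  have hX := eq_pathSeq_mul (s := s) (t := t) (fun k => x (uVert u (p - 1) (q - 1) k)) p
    (fun k h2 hk => hmid _ _ _ ((Aalpha_mulVec_two α _ x _ _ _
      (uVert_ne u (p - 1) (q - 1) k h2 (by omega))
      (uVert_adj_mid H u v (p - 1) (q - 1) k h2 (by omega))).symm.trans (hE _)))
    (fun h2 => by
      have h := uVert_adj_end H u v (p - 1) (q - 1) (by omega)
      rw [show p - 1 + 1 = p by omega] at h
      exact hend _ _ ((Aalpha_mulVec_one α _ x _ _ h).symm.trans (hE _)))
  have hY := eq_pathSeq_mul (s := s) (t := t) (fun k => x (vVert v (p - 1) (q - 1) k)) q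
    (fun k h2 hk => hmid _ _ _ ((Aalpha_mulVec_two α _ x _ _ _
      (vVert_ne v (p - 1) (q - 1) k h2 (by omega))
      (vVert_adj_mid H u v (p - 1) (q - 1) k h2 (by omega))).symm.trans (hE _)))
    (fun h2 => by
      have h := vVert_adj_end H u v (p - 1) (q - 1) (by omega)
      rw [show q - 1 + 1 = q by omega] at h
      exact hend _ _ ((Aalpha_mulVec_one α _ x _ _ h).symm.trans (hE _)))
  have hX1 := hX (p - 1) (by omega)
  have hXp := hX 1 (by omega)
  have hY1 := hY (q - 1) (by omega)
  rw [show p - (p - 1) = 1 by omega] at hX1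
  rw [show q - (q - 1) = 1 by omega] at hY1
  simp only [show pathSeq s t 1 = s from rfl] at hX1 hXp hY1
  have hxp := hx (uVert u (p - 1) (q - 1) p)
  have hyq := hx (vVert v (p - 1) (q - 1) q)
  have hf := (pathSeq_growth ht1 hts (p - 1)).1
  have hspos : 0 < s := by linarith
  have key := pathSeq_ratio ht1 hts hst (show q - 1 + 2 ≤ p - 1 by omega)
  rw [hX1, hXp, hY1, mul_div_assoc', div_le_div_iff₀ (by positivity) (by positivity)]
  have h := mul_le_mul_of_nonneg_right key (mul_pos hxp hyq).le
  linarith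
end

section
/- Let α ∈ [0,1] and let k ≥ 4 be an integer. Then ρ_α(K_k − e) ≥ k − 3 + 2α, where K_k − e is the complete graph on k vertices with one edge removed. -/
/-- `K_k - e`: the complete graph on `k` vertices with the edge `{0,1}` removed. -/
def KminusE (k : ℕ) : SimpleGraph (Fin k) :=
  SimpleGraph.fromRel (fun i j => ¬(i.val = 0 ∧ j.val = 1) ∧ ¬(i.val = 1 ∧ j.val = 0))

/-- The eigenvalue set in `specRad` is finite, so its supremum is a genuine upper bound. -/
lemma le_specRad {n : Type*} [Fintype n] [DecidableEq n] (M : Matrix n n ℝ) (t : ℝ)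
    (v : n → ℝ) (hv : v ≠ 0) (h : M.mulVec v = t • v) : t ≤ specRad M := by
  have hfin : {t : ℝ | ∃ v : n → ℝ, v ≠ 0 ∧ M.mulVec v = t • v}.Finite := by
    refine (Module.End.finite_hasEigenvalue (Matrix.toLin' M)).subset ?_
    rintro s ⟨w, hw, hs⟩
    exact Module.End.hasEigenvalue_of_hasEigenvector
      (Module.End.hasEigenvector_iff.2 ⟨Module.End.mem_eigenspace_iff.2 (by simpa using hs), hw⟩)
  exact le_csSup hfin.bddAbove ⟨v, hv, h⟩

/-- The vector equal to `s` on the two ends of the missing edge and to `t` elsewhere. -/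
def cellVec (k : ℕ) (s t : ℝ) : Fin k → ℝ := fun i => if i.val < 2 then s else t

lemma KminusE_adj (k : ℕ) (i j : Fin k) :
    (KminusE k).Adj i j ↔ i ≠ j ∧ ¬(i.val < 2 ∧ j.val < 2) := by
  simp only [KminusE, SimpleGraph.fromRel_adj, ne_eq, Fin.ext_iff]
  omega

/-- The cell partition is equitable: the sum of a cell-constant vector over the neighbours of
a vertex depends only on the cell of that vertex. -/
lemma sum_neighbors (m : ℕ) (s t : ℝ) (i : Fin (m + 2)) [DecidableRel (KminusE (m + 2)).Adj] :
    ∑ j, (if (KminusE (m + 2)).Adj i j then cellVec (m + 2) s t j else 0) =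
      cellVec (m + 2) (m * t) (2 * s + (m - 1) * t) i := by
  simp only [KminusE_adj, Fin.sum_univ_succ, cellVec]
  refine Fin.cases ?_ (fun i => Fin.cases ?_ (fun i => ?_) i) i
  · simp [Fin.ext_iff]
  · simp [Fin.ext_iff]
  · have h : ∑ j : Fin m, (if i = j then (0 : ℝ) else t) = (m - 1) * t := by
      have h' : ∀ j : Fin m, (if i = j then (0 : ℝ) else t) = t - if i = j then t else 0 := by
        intro j; split_ifs <;> simp
      simp only [h', Finset.sum_sub_distrib]
      simp
      ring
    simp [Fin.ext_iff] at h ⊢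
    rw [h]
    ring

lemma Aalpha_mulVec_cellVec (α : ℝ) (m : ℕ) (s t : ℝ) :
    (Aalpha α (KminusE (m + 2))).mulVec (cellVec (m + 2) s t) =
      cellVec (m + 2) (α * m * s + (1 - α) * (m * t))
        (α * (m + 1) * t + (1 - α) * (2 * s + (m - 1) * t)) := by
  classical
  letI := Classical.decRel (KminusE (m + 2)).Adj
  ext i
  have h1 := sum_neighbors m s t i
  -- The degree is the neighbour sum of the all-ones vector.
  have h2 : ((KminusE (m + 2)).degree i : ℝ) = cellVec (m + 2) m (m + 1) i := by
    have h := sum_neighbors m 1 1 i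
    rw [show cellVec (m + 2) 1 1 = fun _ => 1 by ext; simp [cellVec]] at h
    rw [← SimpleGraph.card_neighborFinset_eq_degree, SimpleGraph.neighborFinset_eq_filter]
    rw [Finset.sum_boole] at h
    rw [h]
    simp only [cellVec]
    split_ifs <;> ring
  have h3 : ((KminusE (m + 2)).adjMatrix ℝ).mulVec (cellVec (m + 2) s t) i =
      cellVec (m + 2) (m * t) (2 * s + (m - 1) * t) i := by
    rw [← h1]
    simp [Matrix.mulVec, dotProduct, SimpleGraph.adjMatrix_apply]
  simp only [Aalpha, Matrix.add_mulVec, Matrix.smul_mulVec, Pi.add_apply, Pi.smul_apply,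
    Matrix.mulVec_diagonal, smul_eq_mul]
  rw [h3, h2]
  simp only [cellVec]
  split_ifs <;> ring

/-- Let `α ∈ [0,1]` and `k ≥ 4`. Then
`ρ_α(K_k − e) ≥ k − 3 + 2α`. -/
theorem KminusE_alphaIndex_lower_bound (α : ℝ) (hα0 : 0 ≤ α) (hα1 : α ≤ 1)
    (k : ℕ) (hk : 4 ≤ k) :
    (k : ℝ) - 3 + 2 * α ≤ rhoAlpha α (KminusE k) := by
  obtain ⟨m, rfl⟩ : ∃ m, k = m + 2 := ⟨k - 2, by omega⟩
  have hm : (2 : ℝ) ≤ m := by exact_mod_cast (by omega : 2 ≤ m)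
  push_cast
  obtain ⟨a, ha⟩ : ∃ a, a = α * (m : ℝ) := ⟨_, rfl⟩
  obtain ⟨b, hb⟩ : ∃ b, b = (m : ℝ) - 1 + 2 * α := ⟨_, rfl⟩
  obtain ⟨c, hc⟩ : ∃ c, c = 2 * (1 - α) ^ 2 * (m : ℝ) := ⟨_, rfl⟩
  have hc0 : 0 ≤ c := by rw [hc]; positivity
  have hab : a < b := by nlinarith [mul_nonneg (sub_nonneg.2 hα1) (sub_nonneg.2 hm)]
  obtain ⟨r, hbr, hr⟩ : ∃ r, b ≤ r ∧ (r - a) * (r - b) = c := by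
    have hsq := Real.sq_sqrt (show 0 ≤ (b - a) ^ 2 + 4 * c by positivity)
    have hle : b - a ≤ √((b - a) ^ 2 + 4 * c) := Real.le_sqrt_of_sq_le (by linarith)
    exact ⟨(a + b + √((b - a) ^ 2 + 4 * c)) / 2, by linarith, by nlinarith⟩
  have key : r ≤ rhoAlpha α (KminusE (m + 2)) := by
    refine le_specRad _ r (cellVec (m + 2) ((1 - α) * m) (r - a)) ?_ ?_
    · intro h
      have h2 := congrFun h ⟨2, by omega⟩
      simp [cellVec] at h2
      linarith
    · rw [Aalpha_mulVec_cellVec]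
      ext i
      simp only [cellVec, Pi.smul_apply, smul_eq_mul]
      split_ifs
      · rw [ha]; ring
      · rw [hc] at hr
        have hb' : α * (m + 1) + (1 - α) * (m - 1) = b := by rw [hb]; ring
        linear_combination (r - a) * hb' - hr
  linarith
end
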